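/- The language T = L ∩ (ΣΣ)^* ∩ R, where L is the set of binary words that are not abelian squares, (ΣΣ)^* is the set of even-length binary words, and R = (1000)^*(100)(10)^*(100)(100)^*, is not context-free. -/

import Mathlib

/-- k-fold concatenation of a word -/
def pw (u : List Bool) (k : ℕ) : List Bool := (List.replicate k u).flatten

/-- a block of `s` zeros -/
def zeros (s : ℕ) : List Bool := List.replicate s false

/-- `w` is an abelian square: `w = s ++ t` with `t` a permutation of `s`
(equivalently over a binary alphabet: equal length and equal number of 1's). -/
def IsAbelianSquare (w : List Bool) : Prop :=
  ∃ s t : List Bool, w = s ++ t ∧ s.length = t.length ∧ s.count true = t.count true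

def w4 : List Bool := [true, false, false, false]
def w3 : List Bool := [true, false, false]
def w2 : List Bool := [true, false]

/-- the word z = (1000)^n (100) (10)^(n!+n) (100) (100)^(2(n!+n)) -/
def Z (n : ℕ) : List Bool :=
  pw w4 n ++ w3 ++ pw w2 (n.factorial + n) ++ w3 ++ pw w3 (2 * (n.factorial + n))

/-- membership in the regular language R = (1000)^* (100) (10)^* (100) (100)^* -/
def InR (w : List Bool) : Prop :=
  ∃ a b c : ℕ, w = pw w4 a ++ w3 ++ pw w2 b ++ w3 ++ pw w3 c

/-- the gap sequence `[s_0, s_1, ..., s_k]` of `w = 0^{s_0} 1 0^{s_1} 1 ⋯ 1 0^{s_k}` -/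
def gaps (w : List Bool) : List ℕ := (w.splitOn true).map List.length

/-- `alt w` = number of indices `1 ≤ i < k` with `s_i ≠ s_{i+1}` -/
def alt (w : List Bool) : ℕ :=
  ((gaps w).tail.zip (gaps w).tail.tail).countP (fun p => decide (p.1 ≠ p.2))

/-- writing `w = 0^{s_1} 1 0^{s_2} 1 ⋯ 0^{s_k} 1 0^{s_{k+1}}` (with k ones),
the cyclic sequence `(s_1 + s_{k+1}, s_2, …, s_k)` -/
def cyclicGaps (w : List Bool) : List ℕ :=
  ((gaps w).headI + (gaps w).getLast!) :: (gaps w).tail.dropLast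

/-- `w` (containing a 1) is uneven: the cyclic gap sequence has length > 1 and
two cyclically adjacent unequal entries (equivalently it is not constant) -/
def Uneven (w : List Bool) : Prop :=
  2 ≤ w.count true ∧ ¬ (cyclicGaps w).Chain' (· = ·)

/-- `w` (containing a 1) is even if it is not uneven -/
def EvenWord (w : List Bool) : Prop := true ∈ w ∧ ¬ Uneven w

section Ogden

variable {Q : Type} (δ : Q → Bool → Q) (wt : Q → Bool → ℕ)

/-- run of the automaton -/
def runA (q : Q) (w : List Bool) : Q := w.foldl δ q

/-- total weight of the edges along the run -/
def cntA : Q → List Bool → ℕ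
  | _, [] => 0
  | q, b :: w => wt q b + cntA (δ q b) w

theorem runA_append (q : Q) (u v : List Bool) :
    runA δ q (u ++ v) = runA δ (runA δ q u) v := by
  simp [runA]

theorem cntA_append (q : Q) (u v : List Bool) :
    cntA δ wt q (u ++ v) = cntA δ wt q u + cntA δ wt (runA δ q u) v := by
  induction u generalizing q with
  | nil => simp [cntA, runA]
  | cons b u ih => simp [cntA, ih, runA, add_assoc]

theorem runA_pw {q : Q} {u : List Bool} (h : runA δ q u = q) (k : ℕ) :
    runA δ q (pw u k) = q := by
  induction k with
  | zero => simp [pw, runA]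
  | succ k ih =>
    have : pw u (k+1) = u ++ pw u k := by simp [pw, List.replicate_succ]
    rw [this, runA_append, h, ih]

theorem cntA_pw {q : Q} {u : List Bool} (h : runA δ q u = q) (k : ℕ) :
    cntA δ wt q (pw u k) = k * cntA δ wt q u := by
  induction k with
  | zero => simp [pw, cntA]
  | succ k ih =>
    have : pw u (k+1) = u ++ pw u k := by simp [pw, List.replicate_succ]
    rw [this, cntA_append, h, ih]; ring

variable (g : ContextFreeGrammar Bool)

/-- embedding of terminal words -/
def tm (w : List Bool) : List (Symbol Bool g.NT) := w.map Symbol.terminal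

theorem tm_append (u v : List Bool) : tm g (u ++ v) = tm g u ++ tm g v := by simp [tm]

/-- forests of derivation trees -/
inductive Yield : List (Symbol Bool g.NT) → List Bool → Prop
  | nil : Yield [] []
  | term (b : Bool) (s : List (Symbol Bool g.NT)) (w : List Bool) :
      Yield s w → Yield (Symbol.terminal b :: s) (b :: w)
  | nt (r : ContextFreeRule Bool g.NT) (s : List (Symbol Bool g.NT)) (w₁ w₂ : List Bool) :
      r ∈ g.rules → Yield r.output w₁ → Yield s w₂ →
      Yield (Symbol.nonterminal r.input :: s) (w₁ ++ w₂)

theorem Yield.append {s₁ s₂ : List (Symbol Bool g.NT)} {w₁ w₂ : List Bool}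
    (h₁ : Yield g s₁ w₁) (h₂ : Yield g s₂ w₂) : Yield g (s₁ ++ s₂) (w₁ ++ w₂) := by
  induction h₁ with
  | nil => exact h₂
  | term b s w _ ih => exact Yield.term _ _ _ ih
  | nt r s w w' hr ho _ _ ih =>
    rw [List.append_assoc]
    exact Yield.nt r _ _ _ hr ho ih

theorem Yield.split {s₁ s₂ : List (Symbol Bool g.NT)} {w : List Bool}
    (h : Yield g (s₁ ++ s₂) w) :
    ∃ w₁ w₂, w = w₁ ++ w₂ ∧ Yield g s₁ w₁ ∧ Yield g s₂ w₂ := by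
  induction s₁ generalizing w with
  | nil => exact ⟨[], w, rfl, Yield.nil, h⟩
  | cons X s₁ ih =>
    cases h with
    | term b s w h =>
      obtain ⟨a, c, rfl, h1, h2⟩ := ih h
      exact ⟨b :: a, c, rfl, Yield.term _ _ _ h1, h2⟩
    | nt r s w w' hr ho h =>
      obtain ⟨a, c, rfl, h1, h2⟩ := ih h
      exact ⟨w ++ a, c, by simp, Yield.nt _ _ _ _ hr ho h1, h2⟩

theorem Yield.of_derives {s : List (Symbol Bool g.NT)} {w : List Bool}
    (h : g.Derives s (tm g w)) : Yield g s w := by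
  induction h using Relation.ReflTransGen.head_induction_on with
  | refl =>
    induction w with
    | nil => exact Yield.nil
    | cons b w ih => exact Yield.term _ _ _ ih
  | head h1 _ ih =>
    obtain ⟨r, hr, h⟩ := h1
    obtain ⟨p, q, rfl, rfl⟩ := h.exists_parts
    obtain ⟨w', w₃, rfl, h1, h3⟩ := Yield.split g ih
    obtain ⟨w₁, w₂, rfl, h1, h2⟩ := Yield.split g h1
    refine Yield.append g (Yield.append g h1 ?_) h3
    have := Yield.nt r [] w₂ [] hr h2 Yield.nil
    simpa using this

theorem derives_app {s₁ s₂ t₁ t₂ : List (Symbol Bool g.NT)}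
    (h₁ : g.Derives s₁ t₁) (h₂ : g.Derives s₂ t₂) : g.Derives (s₁ ++ s₂) (t₁ ++ t₂) :=
  (h₁.append_right s₂).trans (h₂.append_left t₁)

theorem derives_rule {r : ContextFreeRule Bool g.NT} (hr : r ∈ g.rules) :
    g.Derives [Symbol.nonterminal r.input] r.output :=
  ContextFreeGrammar.Produces.single ⟨r, hr, ContextFreeRule.Rewrites.input_output⟩

theorem Yield.derives {s : List (Symbol Bool g.NT)} {w : List Bool}
    (h : Yield g s w) : g.Derives s (tm g w) := by
  induction h with
  | nil => exact ContextFreeGrammar.Derives.refl _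
  | term b s w _ ih => exact ih.append_left [Symbol.terminal b]
  | nt r s w w' hr _ _ ih1 ih2 =>
    rw [tm_append]
    exact derives_app g ((derives_rule g hr).trans ih1) ih2

/-- a nonterminal, with its states, occurring in a derivation -/
def Reach (s : List (Symbol Bool g.NT)) (w : List Bool) (p₀ : Q) (t : g.NT × Q × Q) (m : ℕ) :
    Prop :=
  ∃ u x z, w = u ++ x ++ z ∧ g.Derives s (tm g u ++ [Symbol.nonterminal t.1] ++ tm g z) ∧
    g.Derives [Symbol.nonterminal t.1] (tm g x) ∧ runA δ p₀ u = t.2.1 ∧ runA δ t.2.1 x = t.2.2 ∧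
    m ≤ cntA δ wt p₀ u + cntA δ wt t.2.2 z

/-- pumpable derivation -/
def Pump (s : List (Symbol Bool g.NT)) (w : List Bool) (p₀ : Q) : Prop :=
  ∃ (B : g.NT) (u v x y z : List Bool) (p q : Q), w = u ++ v ++ x ++ y ++ z ∧
    g.Derives s (tm g u ++ [Symbol.nonterminal B] ++ tm g z) ∧
    g.Derives [Symbol.nonterminal B] (tm g v ++ [Symbol.nonterminal B] ++ tm g y) ∧
    g.Derives [Symbol.nonterminal B] (tm g x) ∧
    runA δ p₀ u = p ∧ runA δ p v = p ∧ runA δ p x = q ∧ runA δ q y = q ∧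
    1 ≤ cntA δ wt p v + cntA δ wt q y

variable {g}

theorem Reach.right {X s : List (Symbol Bool g.NT)} {w₁ w₂ : List Bool} {p₀ : Q}
    {t : g.NT × Q × Q} {m : ℕ} (h : Reach δ wt g X w₁ p₀ t m) (hs : g.Derives s (tm g w₂)) :
    Reach δ wt g (X ++ s) (w₁ ++ w₂) p₀ t (m + cntA δ wt (runA δ p₀ w₁) w₂) := by
  obtain ⟨u, x, z, rfl, h1, h2, h3, h4, h5⟩ := h
  refine ⟨u, x, z ++ w₂, by simp, ?_, h2, h3, h4, ?_⟩
  · have := derives_app g h1 hs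
    simpa [tm_append] using this
  · rw [cntA_append, runA_append, runA_append, h3, h4]; omega

theorem Reach.left {X s : List (Symbol Bool g.NT)} {w₁ w₂ : List Bool} {p₀ : Q}
    {t : g.NT × Q × Q} {m : ℕ} (hX : g.Derives X (tm g w₁))
    (h : Reach δ wt g s w₂ (runA δ p₀ w₁) t m) :
    Reach δ wt g (X ++ s) (w₁ ++ w₂) p₀ t (m + cntA δ wt p₀ w₁) := by
  obtain ⟨u, x, z, rfl, h1, h2, h3, h4, h5⟩ := h
  refine ⟨w₁ ++ u, x, z, by simp, ?_, h2, ?_, h4, ?_⟩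
  · have := derives_app g hX h1
    simpa [tm_append] using this
  · rw [runA_append, h3]
  · rw [cntA_append]; omega

theorem Reach.mono {s : List (Symbol Bool g.NT)} {w : List Bool} {p₀ : Q}
    {t : g.NT × Q × Q} {m m' : ℕ} (h : Reach δ wt g s w p₀ t m) (hm : m' ≤ m) :
    Reach δ wt g s w p₀ t m' := by
  obtain ⟨u, x, z, h0, h1, h2, h3, h4, h5⟩ := h
  exact ⟨u, x, z, h0, h1, h2, h3, h4, hm.trans h5⟩

theorem Pump.right {X s : List (Symbol Bool g.NT)} {w₁ w₂ : List Bool} {p₀ : Q}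
    (h : Pump δ wt g X w₁ p₀) (hs : g.Derives s (tm g w₂)) :
    Pump δ wt g (X ++ s) (w₁ ++ w₂) p₀ := by
  obtain ⟨B, u, v, x, y, z, p, q, rfl, h1, h2⟩ := h
  refine ⟨B, u, v, x, y, z ++ w₂, p, q, by simp, ?_, h2⟩
  have := derives_app g h1 hs
  simpa [tm_append] using this

theorem Pump.left {X s : List (Symbol Bool g.NT)} {w₁ w₂ : List Bool} {p₀ : Q}
    (hX : g.Derives X (tm g w₁)) (h : Pump δ wt g s w₂ (runA δ p₀ w₁)) :
    Pump δ wt g (X ++ s) (w₁ ++ w₂) p₀ := by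
  obtain ⟨B, u, v, x, y, z, p, q, rfl, h1, h2, h3, h4, h5⟩ := h
  refine ⟨B, w₁ ++ u, v, x, y, z, p, q, by simp, ?_, h2, h3, ?_, h5⟩
  · have := derives_app g hX h1
    simpa [tm_append] using this
  · rw [runA_append, h4]

variable (g)

/-- induction predicate for the pumping lemma -/
def Bnd (S : Finset (g.NT × Q × Q)) (M : ℕ) (s : List (Symbol Bool g.NT)) (w : List Bool)
    (p₀ : Q) : Prop :=
  Pump δ wt g s w p₀ ∨ ∃ C ⊆ S,
    ((∀ t ∈ C, Reach δ wt g s w p₀ t 0) ∧ cntA δ wt p₀ w ≤ M ^ C.card) ∨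
    ((∀ t ∈ C, Reach δ wt g s w p₀ t 1) ∧ cntA δ wt p₀ w ≤ s.length * M ^ C.card)

variable {g}

theorem Bnd.cons {S C₁ : Finset (g.NT × Q × Q)} {M : ℕ} (hM : 1 ≤ M) {X : Symbol Bool g.NT}
    {s : List (Symbol Bool g.NT)} {w₁ w₂ : List Bool} {p₀ : Q}
    (hX : g.Derives [X] (tm g w₁)) (hs : Yield g s w₂) (hC : C₁ ⊆ S)
    (h1 : ∀ t ∈ C₁, Reach δ wt g [X] w₁ p₀ t 0) (hc : cntA δ wt p₀ w₁ ≤ M ^ C₁.card)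
    (h : Bnd δ wt g S M s w₂ (runA δ p₀ w₁)) :
    Bnd δ wt g S M (X :: s) (w₁ ++ w₂) p₀ := by
  have hsd := hs.derives
  rcases h with h | ⟨C₂, hC₂, h⟩
  · exact Or.inl (Pump.left δ wt hX h)
  right
  rcases Nat.eq_zero_or_pos (cntA δ wt p₀ w₁) with h0 | hpos1
  · refine ⟨C₂, hC₂, ?_⟩
    rw [cntA_append, h0, zero_add]
    rcases h with ⟨ha, hb⟩ | ⟨ha, hb⟩
    · exact Or.inl ⟨fun t ht => (Reach.left δ wt hX (ha t ht)).mono δ wt (by omega), hb⟩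
    · refine Or.inr ⟨fun t ht => (Reach.left δ wt hX (ha t ht)).mono δ wt (by omega), hb.trans ?_⟩
      gcongr; simp
  rcases Nat.eq_zero_or_pos (cntA δ wt (runA δ p₀ w₁) w₂) with h0 | hpos2
  · refine ⟨C₁, hC, Or.inl ⟨fun t ht => (Reach.right δ wt (h1 t ht) hsd).mono δ wt (by omega), ?_⟩⟩
    rw [cntA_append, h0, add_zero]; exact hc
  have hlen : 1 ≤ s.length := by
    cases hs with
    | nil => simp [cntA] at hpos2
    | term => simp
    | nt => simp
  have hr1 : ∀ t ∈ C₁, Reach δ wt g (X :: s) (w₁ ++ w₂) p₀ t 1 :=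
    fun t ht => (Reach.right δ wt (h1 t ht) hsd).mono δ wt (by omega)
  have hr2 : ∀ t ∈ C₂, Reach δ wt g (X :: s) (w₁ ++ w₂) p₀ t 1 := by
    rcases h with ⟨ha, hb⟩ | ⟨ha, hb⟩
    · exact fun t ht => (Reach.left δ wt hX (ha t ht)).mono δ wt (by omega)
    · exact fun t ht => (Reach.left δ wt hX (ha t ht)).mono δ wt (by omega)
  have hb2 : cntA δ wt (runA δ p₀ w₁) w₂ ≤ s.length * M ^ C₂.card := by
    rcases h with ⟨ha, hb⟩ | ⟨ha, hb⟩
    · exact hb.trans (Nat.le_mul_of_pos_left _ hlen)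
    · exact hb
  rcases le_total C₁.card C₂.card with hle | hle
  · refine ⟨C₂, hC₂, Or.inr ⟨hr2, ?_⟩⟩
    rw [cntA_append, List.length_cons]
    have := Nat.pow_le_pow_right hM hle
    linarith [this]
  · refine ⟨C₁, hC, Or.inr ⟨hr1, ?_⟩⟩
    rw [cntA_append, List.length_cons]
    have := Nat.mul_le_mul_left s.length (Nat.pow_le_pow_right hM hle)
    linarith [this]

theorem Yield.bnd [Fintype Q] {S : Finset (g.NT × Q × Q)} {M : ℕ} (hM : 1 ≤ M)
    (hwt : ∀ q b, wt q b ≤ 1)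
    (hS : ∀ r ∈ g.rules, ∀ p q, (r.input, p, q) ∈ S)
    (hMr : ∀ r ∈ g.rules, r.output.length ≤ M)
    {s : List (Symbol Bool g.NT)} {w : List Bool} (h : Yield g s w) (p₀ : Q) :
    Bnd δ wt g S M s w p₀ := by
  classical
  induction h generalizing p₀ with
  | nil => exact Or.inr ⟨∅, by simp, Or.inl (by simp [cntA])⟩
  | term b s w hs ih =>
    refine Bnd.cons δ wt hM (w₁ := [b]) (C₁ := ∅) (ContextFreeGrammar.Derives.refl _) hs (by simp)
      (by simp) (by simpa [cntA] using hwt _ _) (ih _)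
  | nt r s w₁ w₂ hr ho hs ih1 ih2 =>
    have hd : g.Derives [Symbol.nonterminal r.input] (tm g w₁) :=
      (derives_rule g hr).trans ho.derives
    have lift : ∀ t m, Reach δ wt g r.output w₁ p₀ t m →
        Reach δ wt g [Symbol.nonterminal r.input] w₁ p₀ t m := by
      rintro t m ⟨u, x, z, h0, h1, h2⟩
      exact ⟨u, x, z, h0, (derives_rule g hr).trans h1, h2⟩
    rcases ih1 p₀ with hp | ⟨C, hC, ⟨ha, hb⟩ | ⟨ha, hb⟩⟩
    · left
      refine Pump.right δ wt (X := [Symbol.nonterminal r.input]) ?_ hs.derives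
      obtain ⟨B, u, v, x, y, z, p, q, h0, h1, h2⟩ := hp
      exact ⟨B, u, v, x, y, z, p, q, h0, (derives_rule g hr).trans h1, h2⟩
    · exact Bnd.cons δ wt hM hd hs hC (fun t ht => lift _ _ (ha t ht)) hb (ih2 _)
    · by_cases hA : (r.input, p₀, runA δ p₀ w₁) ∈ C
      · left
        refine Pump.right δ wt (X := [Symbol.nonterminal r.input]) ?_ hs.derives
        obtain ⟨u, x, z, h0, h1, h2, h3, h4, h5⟩ := lift _ _ (ha _ hA)
        simp only at h1 h2 h3 h4 h5
        refine ⟨r.input, [], u, x, z, [], p₀, runA δ p₀ w₁, by simpa using h0, ?_, h1, h2,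
          rfl, h3, h4, ?_, h5⟩
        · simpa [tm] using ContextFreeGrammar.Derives.refl _
        · conv_rhs => rw [h0, runA_append, runA_append, h3, h4]
      · refine Bnd.cons δ wt hM (C₁ := insert (r.input, p₀, runA δ p₀ w₁) C) hd hs ?_ ?_ ?_ (ih2 _)
        · exact Finset.insert_subset (hS r hr _ _) hC
        · intro t ht
          rcases Finset.mem_insert.1 ht with rfl | ht
          · refine ⟨[], w₁, [], by simp, ?_, hd, rfl, rfl, by simp⟩
            simpa [tm] using ContextFreeGrammar.Derives.refl _
          · exact (lift _ _ (ha t ht)).mono δ wt (by omega)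
        · rw [Finset.card_insert_of_notMem hA, pow_succ, mul_comm]
          exact hb.trans (Nat.mul_le_mul_right _ (hMr r hr))

theorem pump_iter {B : g.NT} {v x y : List Bool}
    (h1 : g.Derives [Symbol.nonterminal B] (tm g v ++ [Symbol.nonterminal B] ++ tm g y))
    (h2 : g.Derives [Symbol.nonterminal B] (tm g x)) (i : ℕ) :
    g.Derives [Symbol.nonterminal B] (tm g (pw v i ++ x ++ pw y i)) := by
  induction i with
  | zero => simpa [pw] using h2
  | succ i ih =>
    have e1 : pw v (i+1) = v ++ pw v i := by simp [pw, List.replicate_succ]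
    have e2 : pw y (i+1) = pw y i ++ y := by simp [pw, List.replicate_succ']
    have := h1.trans ((ih.append_left (tm g v)).append_right (tm g y))
    rw [e1, e2]
    simpa [tm_append] using this

/-- Ogden's lemma with a finite automaton tracking the states. -/
theorem ogden [Fintype Q] (hwt : ∀ q b, wt q b ≤ 1) {L : Language Bool} (hL : L.IsContextFree)
    (p₀ : Q) :
    ∃ K : ℕ, ∀ w ∈ L, K < cntA δ wt p₀ w →
      ∃ (u v x y z : List Bool) (p q : Q), w = u ++ v ++ x ++ y ++ z ∧
        runA δ p₀ u = p ∧ runA δ p v = p ∧ runA δ p x = q ∧ runA δ q y = q ∧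
        1 ≤ cntA δ wt p v + cntA δ wt q y ∧
        ∀ i, u ++ pw v i ++ x ++ pw y i ++ z ∈ L := by
  classical
  obtain ⟨g, rfl⟩ := hL
  let S : Finset (g.NT × Q × Q) := g.rules.image (fun r => r.input) ×ˢ Finset.univ
  let M : ℕ := g.rules.sup (fun r => r.output.length) + 1
  refine ⟨M ^ S.card, fun w hw hK => ?_⟩
  have hY := Yield.of_derives g (w := w) ((g.mem_language_iff w).1 hw)
  have hb := Yield.bnd δ wt (S := S) (M := M) (by omega) hwt
    (fun r hr p q => by
      simp only [S, Finset.mem_product, Finset.mem_univ, and_true]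
      exact Finset.mem_image_of_mem _ hr)
    (fun r hr => (Finset.le_sup (f := fun r => r.output.length) hr).trans (Nat.le_succ _)) hY p₀
  rcases hb with hp | ⟨C, hC, h⟩
  · obtain ⟨B, u, v, x, y, z, p, q, h0, h1, h2, h3, h4, h5, h6, h7, h8⟩ := hp
    refine ⟨u, v, x, y, z, p, q, h0, h4, h5, h6, h7, h8, fun i => ?_⟩
    rw [g.mem_language_iff]
    have := h1.trans (((pump_iter h2 h3 i).append_left (tm g u)).append_right (tm g z))
    simpa [tm] using this
  · exfalso
    have hle : M ^ C.card ≤ M ^ S.card :=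
      Nat.pow_le_pow_right (by omega) (Finset.card_le_card hC)
    rcases h with ⟨_, h⟩ | ⟨_, h⟩
    · omega
    · simp at h; omega

end Ogden

/-- automaton reading words of R -/
def stp : Fin 10 → Bool → Fin 10
  | 0, true => 1
  | 1, false => 2
  | 2, false => 3
  | 3, false => 0
  | 3, true => 4
  | 4, false => 5
  | 5, true => 4
  | 5, false => 6
  | 6, true => 7
  | 7, false => 8
  | 8, false => 6
  | _, _ => 9

/-- level of a state -/
def lev : Fin 10 → ℕ
  | 0 => 0 | 1 => 0 | 2 => 0 | 3 => 0 | 4 => 1 | 5 => 1 | 6 => 2 | 7 => 2 | 8 => 2 | 9 => 3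

/-- weight counting 1000 blocks -/
def wA (q : Fin 10) (b : Bool) : ℕ := if q = 3 ∧ b = false then 1 else 0
/-- weight counting 10 blocks -/
def wB (q : Fin 10) (b : Bool) : ℕ := if q = 5 ∧ b = true then 1 else 0
/-- weight counting 100 blocks -/
def wC (q : Fin 10) (b : Bool) : ℕ := if q = 8 ∧ b = false then 1 else 0

theorem lev_step : ∀ q b, lev q ≤ lev (stp q b) := by decide

theorem lev_run (w : List Bool) (q : Fin 10) : lev q ≤ lev (runA stp q w) := by
  induction w generalizing q with
  | nil => simp [runA]
  | cons b w ih => exact (lev_step q b).trans (ih _)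

theorem lev_cnt (wt : Fin 10 → Bool → ℕ) (l : ℕ)
    (h : ∀ q b, wt q b ≠ 0 → lev q = l ∧ lev (stp q b) = l) (w : List Bool) (q : Fin 10)
    (hq : runA stp q w = q) (hc : cntA stp wt q w ≠ 0) : lev q = l := by
  have key : ∀ (w : List Bool) (q : Fin 10), cntA stp wt q w ≠ 0 →
      lev q ≤ l ∧ l ≤ lev (runA stp q w) := by
    intro w
    induction w with
    | nil => intro q h; simp [cntA] at h
    | cons b w ih =>
      intro q hc
      have e : runA stp q (b :: w) = runA stp (stp q b) w := rfl
      rw [e]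
      by_cases h0 : wt q b = 0
      · have := ih (stp q b) (by simpa [cntA, h0] using hc)
        exact ⟨(lev_step q b).trans this.1, this.2⟩
      · have h1 := h q b h0
        have h2 := lev_run w (stp q b)
        omega
  have := key w q hc
  rw [hq] at this; omega

theorem pw_succ (u : List Bool) (k : ℕ) : pw u (k+1) = u ++ pw u k := by
  simp [pw, List.replicate_succ]
theorem pw_succ' (u : List Bool) (k : ℕ) : pw u (k+1) = pw u k ++ u := by
  simp [pw, List.replicate_succ']
theorem pw_add (u : List Bool) (k l : ℕ) : pw u (k+l) = pw u k ++ pw u l := by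
  rw [pw, List.replicate_add, List.flatten_append]; rfl
theorem pw_length (u : List Bool) (k : ℕ) : (pw u k).length = k * u.length := by
  simp [pw]
theorem pw_count (u : List Bool) (k : ℕ) : (pw u k).count true = k * u.count true := by
  simp [pw, List.count_flatten]

/-- the word with parameters a, b, c -/
def W (a b c : ℕ) : List Bool := pw w4 a ++ w3 ++ pw w2 b ++ w3 ++ pw w3 c

theorem W_eq (a b c : ℕ) :
    W a b c = pw w4 a ++ (w3 ++ w2) ++ pw w2 b ++ [false] ++ pw w3 c := by
  have h : pw w2 b ++ w2 = w2 ++ pw w2 b := by rw [← pw_succ, ← pw_succ']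
  have h3 : w3 = w2 ++ [false] := rfl
  unfold W
  conv_lhs => rw [List.append_assoc (_ ++ w3)]; arg 1; arg 2; rw [h3, ← List.append_assoc, h]
  simp

theorem cnt_W (wt : Fin 10 → Bool → ℕ) (a b c : ℕ) :
    cntA stp wt 0 (W a b c) = a * cntA stp wt 0 w4 + cntA stp wt 0 (w3 ++ w2)
      + b * cntA stp wt 5 w2 + cntA stp wt 5 [false] + c * cntA stp wt 6 w3 := by
  have h4 : runA stp 0 w4 = 0 := rfl
  have h2 : runA stp 5 w2 = 5 := rfl
  have h3 : runA stp 6 w3 = 6 := rfl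
  have h5 : runA stp 0 (w3 ++ w2) = 5 := rfl
  have h6 : runA stp 5 [false] = 6 := rfl
  rw [W_eq]
  simp only [cntA_append stp wt _ _ (pw w3 c), cntA_append stp wt _ _ [false],
    cntA_append stp wt _ _ (pw w2 b), cntA_append stp wt _ _ (w3 ++ w2), runA_append stp _ _ (pw w3 c),
    runA_append stp _ _ [false], runA_append stp _ _ (pw w2 b), runA_append stp _ _ (w3 ++ w2),
    runA_pw stp h4, runA_pw stp h2, h5, h6, cntA_pw stp wt h4, cntA_pw stp wt h2, cntA_pw stp wt h3]

theorem cnt_W_A (a b c : ℕ) : cntA stp wA 0 (W a b c) = a := by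
  rw [cnt_W]; simp [w4, w3, w2, cntA, wA, stp]
theorem cnt_W_B (a b c : ℕ) : cntA stp wB 0 (W a b c) = b := by
  rw [cnt_W]; simp [w4, w3, w2, cntA, wB, stp]
theorem cnt_W_C (a b c : ℕ) : cntA stp wC 0 (W a b c) = c := by
  rw [cnt_W]; simp [w4, w3, w2, cntA, wC, stp]

theorem W_length (a b c : ℕ) : (W a b c).length = 4 * a + 2 * b + 3 * c + 6 := by
  simp [W, pw_length, w4, w3, w2]; ring
theorem W_count (a b c : ℕ) : (W a b c).count true = a + b + c + 2 := by
  simp [W, pw_count, w4, w3, w2]; ring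

theorem square1 (N j : ℕ) : IsAbelianSquare (W N (N + 2 * j) (2 * N)) := by
  refine ⟨pw w4 N ++ w3 ++ pw w2 (N + j), pw w2 j ++ w3 ++ pw w3 (2 * N), ?_, ?_, ?_⟩
  · have : N + 2 * j = (N + j) + j := by ring
    rw [W, this, pw_add]; simp
  · simp [pw_length, w4, w3, w2]; ring
  · simp [pw_count, w4, w3, w2]; ring

theorem square2 (N e : ℕ) : IsAbelianSquare (W N N (2 * N + 2 * e)) := by
  refine ⟨pw w4 N ++ w3 ++ pw w2 N ++ pw w3 e, pw w3 (2 * N + e + 1), ?_, ?_, ?_⟩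
  · rw [List.append_assoc (_ ++ _ ++ _), ← pw_add, W, List.append_assoc (_ ++ _ ++ _), ← pw_succ]
    congr 2; ring
  · simp [pw_length, w4, w3, w2]; ring
  · simp [pw_count, w4, w3, w2]; ring

theorem suffix_bound (K : ℕ) (t : List Bool) (h : t <:+ pw w3 K) :
    3 * t.count true ≤ t.length := by
  induction K with
  | zero => simp [pw] at h; simp [h]
  | succ K ih =>
    have e : pw w3 (K+1) = true :: false :: false :: pw w3 K := by rw [pw_succ]; rfl
    rw [e] at h
    have hc := pw_count w3 K
    have hl := pw_length w3 K
    have h1 : w3.count true = 1 := rfl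
    have h2 : w3.length = 3 := rfl
    rw [h1] at hc
    rw [h2] at hl
    rcases List.suffix_cons_iff.1 h with rfl | h
    · simp [hc, hl]; omega
    rcases List.suffix_cons_iff.1 h with rfl | h
    · simp [hc, hl]; omega
    rcases List.suffix_cons_iff.1 h with rfl | h
    · simp [hc, hl]; omega
    exact ih h

theorem nonsquare (n N : ℕ) (h : n < N) : ¬ IsAbelianSquare (W n N (2 * N)) := by
  rintro ⟨s, t, hw, hl, hc⟩
  have e1 := W_length n N (2 * N)
  have e2 := W_count n N (2 * N)
  rw [hw, List.length_append] at e1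
  rw [hw, List.count_append] at e2
  have hs : pw w3 (2 * N + 1) <:+ W n N (2 * N) :=
    ⟨pw w4 n ++ w3 ++ pw w2 N, by rw [pw_succ, W]; simp⟩
  have ht : t <:+ W n N (2 * N) := ⟨s, hw.symm⟩
  have h3 : w3.length = 3 := rfl
  have := suffix_bound _ t (List.suffix_of_suffix_length_le ht hs (by rw [pw_length, h3]; omega))
  omega

theorem stmt11 :
    ¬ Language.IsContextFree
      {w : List Bool | ¬ IsAbelianSquare w ∧ Even w.length ∧ InR w} := by
  intro hL
  obtain ⟨K, hK⟩ := ogden stp wA (by decide) hL 0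
  set n := K + 1 with hn
  set N := n + 2 * n.factorial with hN
  have hfac := Nat.factorial_pos n
  have hw := hK (W n N (2 * N)) ⟨nonsquare n N (by omega), by rw [W_length]; exact ⟨2 * n + N + 3 * N + 3, by ring⟩,
    n, N, 2 * N, rfl⟩ (by rw [cnt_W_A]; omega)
  obtain ⟨u, v, x, y, z, p, q, hw, hu, hv, hx, hy, h1, hi⟩ := hw
  have cnt0 : ∀ wt, cntA stp wt 0 (u ++ v ++ x ++ y ++ z) = cntA stp wt 0 u + cntA stp wt p v
      + cntA stp wt p x + cntA stp wt q y + cntA stp wt q z := by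
    intro wt
    simp only [cntA_append, runA_append, hu, hv, hx, hy]
  have cnti : ∀ wt i, cntA stp wt 0 (u ++ pw v i ++ x ++ pw y i ++ z) =
      cntA stp wt 0 u + i * cntA stp wt p v
      + cntA stp wt p x + i * cntA stp wt q y + cntA stp wt q z := by
    intro wt i
    simp only [cntA_append, runA_append, hu, hx, runA_pw stp hv, runA_pw stp hy,
      cntA_pw stp wt hv, cntA_pw stp wt hy]
  have cA := cnt0 wA
  have cB := cnt0 wB
  have cC := cnt0 wC
  rw [← hw, cnt_W_A] at cA
  rw [← hw, cnt_W_B] at cB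
  rw [← hw, cnt_W_C] at cC
  have excl : cntA stp wB p v + cntA stp wB q y = 0 ∨ cntA stp wC p v + cntA stp wC q y = 0 := by
    have a1 := lev_cnt wA 0 (by decide) v p hv
    have a2 := lev_cnt wA 0 (by decide) y q hy
    have b1 := lev_cnt wB 1 (by decide) v p hv
    have b2 := lev_cnt wB 1 (by decide) y q hy
    have c1 := lev_cnt wC 2 (by decide) v p hv
    have c2 := lev_cnt wC 2 (by decide) y q hy
    omega
  obtain ⟨d, hd⟩ : cntA stp wA p v + cntA stp wA q y ∣ n.factorial :=
    Nat.dvd_factorial (by omega) (by omega)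
  obtain ⟨hns, _, a, b, c, hR⟩ := hi (1 + 2 * d)
  change _ = W a b c at hR
  have dA := cnti wA (1 + 2 * d)
  have dB := cnti wB (1 + 2 * d)
  have dC := cnti wC (1 + 2 * d)
  rw [hR, cnt_W_A] at dA
  rw [hR, cnt_W_B] at dB
  rw [hR, cnt_W_C] at dC
  rw [hR] at hns
  have ea : a = N := by rw [hN, hd]; linarith
  have eb : b = N + 2 * (d * (cntA stp wB p v + cntA stp wB q y)) := by linarith
  have ec : c = 2 * N + 2 * (d * (cntA stp wC p v + cntA stp wC q y)) := by linarith
  rcases excl with h | h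
  · rw [h] at eb

    rw [ea, eb, ec] at hns
    exact hns (by simpa using square2 N _)
  · rw [h] at ec

    rw [ea, eb, ec] at hns
    exact hns (by simpa using square1 N _)
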